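/- arXiv:1402.3056 — 4 statements merged into one kernel-verified Lean document; each statement's English description precedes it below -/
import Mathlib

section
/- For every gamble f on Ω, the Ville–Vovk–Shafer natural extension dominates the Williams natural extension: E_V(f) ≥ E_W(f). -/
/-!
Given `α`, `n` and an almost-desirable selection `S` with `F^S_n ≤ f - α`, stop `S` at time `n`:
replace `S s` by the zero gamble for every situation `s` of length at least `n`. The stopped
selection is still almost-desirable, as `E(0|s) = 0` by positive homogeneity
(`haltAt_almostDesirable`), and its process is constant, equal to `F^S_n`, from time `n` onwards
(`procF_haltAt`). Hence its limsup is `F^S_n ≤ f - α`,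
and every `α` admissible for `E_W(f)` is admissible for `E_V(f)`.
-/

open Filter

/-- The length-`n` initial segment `ω_n` of a path `ω`. -/
def seg {X : Type} (ω : ℕ → X) (n : ℕ) : List X :=
  List.ofFn (fun i : Fin n => ω i)

/-- The cylinder set of a situation `s`: all paths having `s` as initial segment. -/
def cyl {X : Type} (s : List X) : Set (ℕ → X) :=
  {ω | seg ω s.length = s}

/-- A gamble `f` on paths is `n`-measurable if it only depends on the first `n` states. -/
def Meas {X : Type} (n : ℕ) (f : (ℕ → X) → ℝ) : Prop :=
  ∀ ω ω' : ℕ → X, seg ω n = seg ω' n → f ω = f ω'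

/-- A local model assigns to every situation a superadditive, positively homogeneous
functional on gambles on `X` that dominates the minimum. -/
def IsLocalModel {X : Type} [Fintype X] [Nonempty X]
    (E : List X → (X → ℝ) → ℝ) : Prop :=
  (∀ (s : List X) (f g : X → ℝ), E s f + E s g ≤ E s (f + g)) ∧
  (∀ (s : List X) (c : ℝ) (f : X → ℝ), 0 ≤ c → E s (c • f) = c * E s f) ∧
  (∀ (s : List X) (f : X → ℝ), (⨅ x, f x) ≤ E s f)

/-- The real process `F^S` associated with a selection `S`:
`F^S(x₁…xₙ) = ∑_{i=1}^n S(x₁…x_{i-1})(x_i)`. -/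
noncomputable def procF {X : Type} (S : List X → X → ℝ) (s : List X) : ℝ :=
  ∑ i : Fin s.length, S (s.take i.1) (s.get i)

/-- `limsup F^S`, as a gamble on paths (valued in the extended reals). -/
noncomputable def limsupF {X : Type} (S : List X → X → ℝ) (ω : ℕ → X) : EReal :=
  Filter.limsup (fun n => ((procF S (seg ω n) : ℝ) : EReal)) Filter.atTop

/-- A selection is almost-desirable (w.r.t. the local model `E`) if `E(S(s)|s) ≥ 0`
for every situation `s`. -/
def AlmostDesirable {X : Type} (E : List X → (X → ℝ) → ℝ)
    (S : List X → X → ℝ) : Prop :=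
  ∀ s : List X, 0 ≤ E s (S s)

/-- The Williams natural extension `E_W(f)`. -/
noncomputable def EW {X : Type} (E : List X → (X → ℝ) → ℝ)
    (f : (ℕ → X) → ℝ) : EReal :=
  sSup {a : EReal | ∃ α : ℝ, a = (α : EReal) ∧
    ∃ (n : ℕ) (S : List X → X → ℝ), AlmostDesirable E S ∧
      ∀ ω : ℕ → X, procF S (seg ω n) ≤ f ω - α}

/-- The Ville–Vovk–Shafer natural extension `E_V(f)`. -/
noncomputable def EV {X : Type} (E : List X → (X → ℝ) → ℝ)
    (f : (ℕ → X) → ℝ) : EReal :=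
  sSup {a : EReal | ∃ α : ℝ, a = (α : EReal) ∧
    ∃ S : List X → X → ℝ, AlmostDesirable E S ∧
      ∀ ω : ℕ → X, limsupF S ω ≤ ((f ω - α : ℝ) : EReal)}

theorem length_seg {X : Type} (ω : ℕ → X) (n : ℕ) : (seg ω n).length = n := by
  simp [seg]

theorem take_seg {X : Type} (ω : ℕ → X) {i n : ℕ} (h : i ≤ n) :
    (seg ω n).take i = seg ω i := by
  apply List.ext_getElem
  · simp [seg, h]
  · intro j h1 h2
    simp [seg]

/-- `F^S(ω_n)` as a sum over times, free of the dependent index type in `procF`. -/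
theorem procF_seg {X : Type} (S : List X → X → ℝ) (ω : ℕ → X) (n : ℕ) :
    procF S (seg ω n) = ∑ i ∈ Finset.range n, S (seg ω i) (ω i) := by
  have h : procF S (seg ω n) =
      ∑ i : Fin (seg ω n).length, S (seg ω i.1) (ω i.1) := by
    refine Finset.sum_congr rfl fun i _ => ?_
    have hi : i.1 ≤ n := (i.2.trans_eq (length_seg ω n)).le
    have hget : (seg ω n).get i = ω i.1 := by
      rw [List.get_eq_getElem]
      exact List.getElem_ofFn _
    rw [take_seg ω hi, hget]
  rw [h, Fin.sum_univ_eq_sum_range (fun i => S (seg ω i) (ω i)), length_seg]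

/-- The selection `S` stopped at time `n`: the zero gamble is selected from time `n` onwards. -/
noncomputable def haltAt {X : Type} (S : List X → X → ℝ) (n : ℕ) : List X → X → ℝ :=
  fun s => if s.length < n then S s else 0

theorem haltAt_almostDesirable {X : Type} [Fintype X] [Nonempty X]
    {E : List X → (X → ℝ) → ℝ} (hE : IsLocalModel E) {S : List X → X → ℝ}
    (hS : AlmostDesirable E S) (n : ℕ) : AlmostDesirable E (haltAt S n) := by
  intro s
  unfold haltAt
  split_ifs
  · exact hS s
  · have h := hE.2.1 s 0 0 le_rfl
    rw [zero_smul, zero_mul] at h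
    exact h.ge

theorem procF_haltAt {X : Type} (S : List X → X → ℝ) (ω : ℕ → X) {n m : ℕ} (h : n ≤ m) :
    procF (haltAt S n) (seg ω m) = procF S (seg ω n) := by
  rw [procF_seg, procF_seg]
  symm
  apply Finset.sum_subset_zero_on_sdiff (Finset.range_mono h)
  · intro i hi
    simp only [Finset.mem_sdiff, Finset.mem_range] at hi
    simp [haltAt, length_seg, hi.2]
  · intro i hi
    simp only [Finset.mem_range] at hi
    simp [haltAt, length_seg, hi]

/-- the Ville–Vovk–Shafer natural extension dominates the Williams one. -/
theorem williams_le_ville {X : Type} [Fintype X] [Nonempty X]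
    (E : List X → (X → ℝ) → ℝ) (hE : IsLocalModel E)
    (f : (ℕ → X) → ℝ) :
    EW E f ≤ EV E f := by
  apply sSup_le_sSup
  rintro a ⟨α, rfl, n, S, hS, hf⟩
  refine ⟨α, rfl, haltAt S n, haltAt_almostDesirable hE hS n, fun ω => ?_⟩
  have h : (fun m => ((procF (haltAt S n) (seg ω m) : ℝ) : EReal)) =ᶠ[atTop]
      fun _ => ((procF S (seg ω n) : ℝ) : EReal) := by
    filter_upwards [eventually_ge_atTop n] with m hm
    rw [procF_haltAt S ω hm]
  rw [limsupF, limsup_congr h, limsup_const]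
  exact EReal.coe_le_coe_iff.mpr (hf ω)
end

section
/- Let S be an almost-desirable selection. Then for every situation s there exists a path ω ∈ cyl(s) such that F^S(ω_m) ≥ F^S(s) for all m ≥ ℓ(s); consequently limsup F^S(ω) ≥ F^S(s). -/
/-!
An almost-desirable gamble `f` takes a nonnegative value somewhere: superadditivity and
`E(0) = 0` give `E(f) ≤ -E(-f)`, and dominating the minimum gives `-E(-f) ≤ max f`, so
`0 ≤ max f` (`exists_nonneg_of_localModel`). Prolonging `s` step by step with such a state of
`S(u)` at the current situation `u` yields a path along which every increment of `F^S` after `s`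
is nonnegative.
-/

open Filter

/-- The local step: a gamble with nonnegative lower expectation is nonnegative at some state. -/
lemma exists_nonneg_of_localModel {X : Type} [Fintype X] [Nonempty X]
    {E : List X → (X → ℝ) → ℝ} (hE : IsLocalModel E) (s : List X) (f : X → ℝ)
    (hf : 0 ≤ E s f) : ∃ x, 0 ≤ f x := by
  obtain ⟨hadd, hhom, hmin⟩ := hE
  by_contra! hneg
  obtain ⟨x, hx⟩ := exists_eq_ciInf_of_finite (f := fun x => (-f) x)
  have h0 : E s 0 = 0 := by simpa using hhom s 0 0 le_rfl
  have hsum := hadd s f (-f)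
  rw [add_neg_cancel, h0] at hsum
  have hm := hmin s (-f)
  rw [← hx] at hm
  have := hneg x
  simp only [Pi.neg_apply] at hm
  linarith

lemma procF_concat {X : Type} (S : List X → X → ℝ) (u : List X) (x : X) :
    procF S (u ++ [x]) = procF S u + S u x := by
  -- Passing to a sum over `Finset.range` removes the dependence of the index type on the list.
  have key : ∀ v : List X, procF S v = ∑ i ∈ Finset.range v.length,
      if h : i < v.length then S (v.take i) v[i] else 0 := by
    intro v
    rw [Finset.sum_range]
    simp [procF]
  have hlen : Finset.range (u ++ [x]).length = Finset.range (u.length + 1) := by simp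
  rw [key, key, hlen, Finset.sum_range_succ]
  congr 1
  · refine Finset.sum_congr rfl fun i hi => ?_
    have hi' : i < u.length := Finset.mem_range.1 hi
    have hi'' : i < (u ++ [x]).length := by simp; omega
    rw [dif_pos hi', dif_pos hi'', List.take_append_of_le_length hi'.le,
      List.getElem_append_left hi']
  · simp

lemma seg_succ {X : Type} (ω : ℕ → X) (n : ℕ) : seg ω (n + 1) = seg ω n ++ [ω n] := by
  rw [seg, List.ofFn_succ', List.concat_eq_append]
  rfl

/-- from any situation `s`, an almost-desirable selection admits a path
in `cyl(s)` along which `F^S` never drops below `F^S(s)`; hence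
`limsup F^S(ω) ≥ F^S(s)` on that path. -/
theorem exists_nondropping_path {X : Type} [Fintype X] [Nonempty X]
    (E : List X → (X → ℝ) → ℝ) (hE : IsLocalModel E)
    (S : List X → X → ℝ) (hS : AlmostDesirable E S) :
    ∀ s : List X, ∃ ω ∈ cyl s,
      (∀ m : ℕ, s.length ≤ m → procF S s ≤ procF S (seg ω m)) ∧
      ((procF S s : ℝ) : EReal) ≤ limsupF S ω := by
  intro s
  choose next hnext using fun u => exists_nonneg_of_localModel hE u (S u) (hS u)
  -- `t k` prolongs `s` by `k` states chosen by `next`, and `ω` is the path through all `t k`.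
  let t : ℕ → List X := fun k => Nat.rec s (fun _ u => u ++ [next u]) k
  let ω : ℕ → X := fun i => if h : i < s.length then s[i] else next (t (i - s.length))
  have hseg : ∀ k, seg ω (s.length + k) = t k := by
    intro k
    induction k with
    | zero =>
      refine List.ext_getElem (by simp [seg, t]) fun i h₁ hi => ?_
      simp [seg, ω, t]
    | succ k ih =>
      rw [← add_assoc, seg_succ, ih]
      simp [ω, t]
  have hmono : ∀ k, procF S s ≤ procF S (t k) := by
    intro k
    induction k with
    | zero => exact le_rfl
    | succ k ih =>
      have hstep : procF S (t (k + 1)) = procF S (t k) + S (t k) (next (t k)) :=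
        procF_concat S (t k) _
      linarith [hnext (t k)]
  have hge : ∀ m : ℕ, s.length ≤ m → procF S s ≤ procF S (seg ω m) := by
    intro m hm
    obtain ⟨k, rfl⟩ := Nat.exists_eq_add_of_le hm
    rw [hseg]
    exact hmono k
  refine ⟨ω, hseg 0, hge, ?_⟩
  refine le_limsup_of_frequently_le (Eventually.frequently ?_)
  filter_upwards [eventually_ge_atTop s.length] with m hm
  exact EReal.coe_le_coe_iff.2 (hge m hm)
end

section
/- Let 𝒳 be a nonempty finite set, let Ω be the set of infinite sequences of elements of 𝒳, and for ω ∈ Ω and n ≥ 0 let ω_n denote the finite sequence of the first n terms of ω. Suppose n* : Ω → ℕ satisfies: for all ω, ω' ∈ Ω, if ω'_{n*(ω)} = ω_{n*(ω)} then n*(ω') = n*(ω). Then n* is bounded, i.e., there exists N ∈ ℕ such that n*(ω) < N for all ω ∈ Ω. -/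
/-!
A map determined by the first `nstar ω` states of its argument is locally constant, hence
continuous, when `X` is discrete and `ℕ → X` has the product topology. As `X` is finite,
`ℕ → X` is compact by Tychonoff, so the range of `nstar` is a compact, hence bounded,
subset of `ℕ`.
-/

open Filter

/-- a map `n* : Ω → ℕ` that is determined by the first `n*(ω)` states
of its argument is bounded. -/
theorem stopping_time_bounded {X : Type} [Fintype X] [Nonempty X]
    (nstar : (ℕ → X) → ℕ)
    (h : ∀ ω ω' : ℕ → X, seg ω' (nstar ω) = seg ω (nstar ω) → nstar ω' = nstar ω) :
    ∃ N : ℕ, ∀ ω : ℕ → X, nstar ω < N := by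
  let _ : TopologicalSpace X := ⊥
  have : DiscreteTopology X := ⟨rfl⟩
  -- The cylinder of the length-`nstar ω` initial segment of `ω` is a neighbourhood of `ω`.
  have hc : Continuous nstar := by
    refine continuous_discrete_rng.2 fun k => isOpen_iff_mem_nhds.2 fun ω hω => ?_
    have hopen : IsOpen (⋂ i : Fin (nstar ω), {ω' : ℕ → X | ω' i = ω i}) :=
      isOpen_iInter_of_finite fun i =>
        (isOpen_discrete ({ω i} : Set X)).preimage
          (continuous_apply (i : ℕ) : Continuous fun ω' : ℕ → X => ω' i)
    refine mem_of_superset (hopen.mem_nhds (by simp)) fun ω' hω' => ?_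
    have hseg : seg ω' (nstar ω) = seg ω (nstar ω) :=
      congrArg List.ofFn (funext fun i => Set.mem_iInter.1 hω' i)
    exact (h ω ω' hseg).trans hω
  obtain ⟨M, hM⟩ := (isCompact_range hc).bddAbove
  exact ⟨M + 1, fun ω => Nat.lt_succ_of_le (hM ⟨ω, rfl⟩)⟩
end

section
/- Let (S_n)_{n≥0} be a sequence of almost-desirable selections such that for every situation s the real sequence (F^{S_n}(s))_{n≥0} is bounded, and let ε > 0. Then there exists an almost-desirable selection S such that F^S(s) ≤ limsup_{n→∞} F^{S_n}(s) + ε for every situation s; consequently, limsup_{m→∞} F^S(ω_m) ≤ limsup_{m→∞} [limsup_{n→∞} F^{S_n}(ω_m)] + ε for every path ω. -/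
/-!
The selection is obtained as a limit along a nonprincipal ultrafilter `U` on `ℕ`. Each sequence
`n ↦ F^{S_n}(s)` is bounded, so it converges along `U` to a real number `L s`. As `F^S` is additive
along extensions (`procF_append_singleton`), the increments `S_n(s)(x)` converge along `U` to
`T(s)(x) = L(sx) - L(s)`, whose process is exactly `L`. Superadditivity together with domination
of the minimum makes each `E(·|s)` lower semicontinuous enough to pass to the limit
(`nonneg_of_tendsto`), so `T` is almost-desirable. Since `U` refines `atTop`, `L s` is at most the
`limsup` of `F^{S_n}(s)`; this gives both bounds, even without the slack `ε`.
-/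

open Filter

theorem procF_append_singleton {X : Type} (S : List X → X → ℝ) (s : List X) (x : X) :
    procF S (s ++ [x]) = procF S s + S s x := by
  -- Summing over `range` avoids the dependence of the index type on the length of the list.
  have key : ∀ l : List X, procF S l =
      ∑ i ∈ Finset.range l.length, (l[i]?).elim 0 (S (l.take i)) := by
    intro l
    rw [Finset.sum_range]
    unfold procF
    refine Finset.sum_congr rfl fun i _ => ?_
    simp
  rw [key, key, List.length_append, List.length_singleton, Finset.sum_range_succ]
  congr 1
  · refine Finset.sum_congr rfl fun i hi => ?_
    have hi' : i < s.length := Finset.mem_range.mp hi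
    rw [List.getElem?_append_left hi', List.take_append_of_le_length hi'.le]
  · simp

/-- The cone `{f | 0 ≤ E(f|s)}` is closed under pointwise limits: if `g n` lies in it and
`g n → f`, then `E(f|s) ≥ E(g n|s) + E(f - g n|s) ≥ min (f - g n)`, which exceeds any `-δ < 0`
eventually because `X` is finite. -/
theorem nonneg_of_tendsto {X : Type} [Fintype X] [Nonempty X]
    {E : List X → (X → ℝ) → ℝ} (hE : IsLocalModel E) (s : List X)
    {U : Filter ℕ} [U.NeBot] {g : ℕ → X → ℝ} {f : X → ℝ}
    (hg : ∀ n, 0 ≤ E s (g n)) (hlim : ∀ x, Tendsto (fun n => g n x) U (nhds (f x))) :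
    0 ≤ E s f := by
  refine le_of_forall_pos_lt_add fun δ hδ => ?_
  have hev : ∀ᶠ n in U, ∀ x, g n x < f x + δ / 2 :=
    eventually_all.mpr fun x => (hlim x).eventually_lt_const (by linarith)
  obtain ⟨n, hn⟩ := hev.exists
  have h1 := hE.1 s (g n) (f - g n)
  rw [add_sub_cancel] at h1
  have h2 := hE.2.2 s (f - g n)
  have h3 : -(δ / 2) ≤ ⨅ x, (f - g n) x := le_ciInf fun x => by
    have := hn x
    simp only [Pi.sub_apply]
    linarith
  linarith [hg n]

/-- from a sequence of almost-desirable selections whose processes are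
pointwise bounded, one can construct a single almost-desirable selection whose
process is within `ε` of the pointwise `limsup` of the given processes. -/
theorem diagonal_selection {X : Type} [Fintype X] [Nonempty X]
    (E : List X → (X → ℝ) → ℝ) (hE : IsLocalModel E)
    (S : ℕ → List X → X → ℝ) (hS : ∀ n, AlmostDesirable E (S n))
    (hbd : ∀ s : List X, ∃ M : ℝ, ∀ n : ℕ, |procF (S n) s| ≤ M)
    (ε : ℝ) (hε : 0 < ε) :
    ∃ T : List X → X → ℝ, AlmostDesirable E T ∧
      (∀ s : List X,
        procF T s ≤ Filter.limsup (fun n => procF (S n) s) Filter.atTop + ε) ∧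
      (∀ ω : ℕ → X,
        limsupF T ω ≤
          Filter.limsup
            (fun m =>
              ((Filter.limsup (fun n => procF (S n) (seg ω m)) Filter.atTop : ℝ) : EReal))
            Filter.atTop + (ε : EReal)) := by
  let U : Ultrafilter ℕ := hyperfilter ℕ
  have hU : (U : Filter ℕ) ≤ atTop := Nat.hyperfilter_le_atTop
  have hex : ∀ s : List X, ∃ L : ℝ, Tendsto (fun n => procF (S n) s) U (nhds L) := by
    intro s
    obtain ⟨M, hM⟩ := hbd s
    have hmem : ∀ n, procF (S n) s ∈ Set.Icc (-M) M := fun n => abs_le.mp (hM n)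
    obtain ⟨L, -, hL⟩ := (isCompact_Icc (a := -M) (b := M)).ultrafilter_le_nhds
      (U.map fun n => procF (S n) s)
      (le_principal_iff.mpr (Ultrafilter.mem_map.mpr (univ_mem' hmem)))
    exact ⟨L, hL⟩
  choose L hL using hex
  have hL0 : L [] = 0 := by
    refine tendsto_nhds_unique (hL []) ?_
    simp [procF]
  have hproc : ∀ s, procF (fun s x => L (s ++ [x]) - L s) s = L s := by
    intro s
    induction s using List.reverseRecOn with
    | nil => simp [procF, hL0]
    | append_singleton s x ih => rw [procF_append_singleton, ih]; ring
  have hle : ∀ s, L s ≤ limsup (fun n => procF (S n) s) atTop := by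
    intro s
    obtain ⟨M, hM⟩ := hbd s
    rw [← (hL s).limsup_eq]
    exact limsup_le_limsup_of_le hU (hL s).isBoundedUnder_ge.isCoboundedUnder_le
      (isBoundedUnder_of ⟨M, fun n => (abs_le.mp (hM n)).2⟩)
  refine ⟨fun s x => L (s ++ [x]) - L s, fun s => ?_, fun s => ?_, fun ω => ?_⟩
  · refine nonneg_of_tendsto hE s (U := U) (fun n => hS n s) fun x => ?_
    refine ((hL (s ++ [x])).sub (hL s)).congr fun n => ?_
    rw [procF_append_singleton]
    ring
  · rw [hproc]
    linarith [hle s]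
  · refine le_trans ?_ (le_add_of_nonneg_right (EReal.coe_nonneg.mpr hε.le))
    refine limsup_le_limsup (Eventually.of_forall fun m => ?_)
    simp only [hproc]
    exact EReal.coe_le_coe_iff.mpr (hle _)
end
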